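/- arXiv:2505.21159 — 5 statements merged into one kernel-verified Lean document; each statement's English description precedes it below -/
import Mathlib

section
/- Let s₀ be a segment, p ∈ ℙ_{s₀} an MY path for s₀, and (s₁, …, s_l) a ladder. Then at most one index k ∈ {1, …, l} satisfies s_k ∈ c_p^+, and at most one index k satisfies s_k ∈ c_p^−. -/
namespace SnakePaper

/-- `zle a b` : `b - a` is a nonnegative integer (the integrality order `a ≤ b`). -/
def zle (a b : ℚ) : Prop := ∃ n : ℤ, 0 ≤ n ∧ b - a = (n : ℚ)

/-- `zlt a b` : `b - a` is a positive integer (the integrality order `a < b`). -/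
def zlt (a b : ℚ) : Prop := ∃ n : ℤ, 0 < n ∧ b - a = (n : ℚ)

/-- `s = (i, j)` is an `N`-segment: `2i ∈ ℤ`, `j - i ∈ ℤ` and `0 ≤ j - i ≤ N + 1`. -/
def IsSeg (N : ℕ) (s : ℚ × ℚ) : Prop :=
  (∃ m : ℤ, 2 * s.1 = (m : ℚ)) ∧
  ∃ n : ℤ, s.2 - s.1 = (n : ℚ) ∧ 0 ≤ n ∧ (n : ℚ) ≤ (N : ℚ) + 1

/-- `s = (i, j)` is a proper `N`-segment: `2i ∈ ℤ`, `j - i ∈ ℤ` and `0 < j - i < N + 1`. -/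
def IsProperSeg (N : ℕ) (s : ℚ × ℚ) : Prop :=
  (∃ m : ℤ, 2 * s.1 = (m : ℚ)) ∧
  ∃ n : ℤ, s.2 - s.1 = (n : ℚ) ∧ 0 < n ∧ (n : ℚ) < (N : ℚ) + 1

/-- `supp [i,j] = j - i`. -/
def supp (s : ℚ × ℚ) : ℚ := s.2 - s.1

/-- `spar [i,j] = i + j`. -/
def spar (s : ℚ × ℚ) : ℚ := s.1 + s.2

/-- Right dual `s* = [j - h, i]`, where `h = N + 1`. -/
def dual (N : ℕ) (s : ℚ × ℚ) : ℚ × ℚ := (s.2 - ((N : ℚ) + 1), s.1)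

/-- Left dual `*s = [j, i + h]`, where `h = N + 1`. -/
def ldual (N : ℕ) (s : ℚ × ℚ) : ℚ × ℚ := (s.2, s.1 + ((N : ℚ) + 1))

/-- `1 + s = [i + 1, j + 1]`. -/
def shift (s : ℚ × ℚ) : ℚ × ℚ := (s.1 + 1, s.2 + 1)

/-- `Covers N s₂ s₁` : `s₂ ▷ s₁`, i.e. `i₁ < i₂ ≤ j₁ < j₂ ≤ h + i₁` (integrality order). -/
def Covers (N : ℕ) (s₂ s₁ : ℚ × ℚ) : Prop :=
  zlt s₁.1 s₂.1 ∧ zle s₂.1 s₁.2 ∧ zlt s₁.2 s₂.2 ∧ zle s₂.2 (((N : ℚ) + 1) + s₁.1)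

/-- For `s₂ ▷ s₁`, the intersection `s₁ ∩ s₂ = [i₂, j₁]`. -/
def seginter (s₁ s₂ : ℚ × ℚ) : ℚ × ℚ := (s₂.1, s₁.2)

/-- For `s₂ ▷ s₁`, the union `s₁ ∪ s₂ = [i₁, j₂]`. -/
def segunion (s₁ s₂ : ℚ × ℚ) : ℚ × ℚ := (s₁.1, s₂.2)

/-- `(s 0, …, s (l-1))` is a ladder of length `l`. -/
def IsLadder (N l : ℕ) (s : ℕ → ℚ × ℚ) : Prop :=
  (∀ k, k < l → IsSeg N (s k)) ∧
  ∀ k m, k < m → m < l → zlt (s k).1 (s m).1 ∧ zlt (s k).2 (s m).2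

/-- `(s₁, s₂)` is a ladder of length 2. -/
def IsLadder2 (N : ℕ) (s₁ s₂ : ℚ × ℚ) : Prop :=
  IsSeg N s₁ ∧ IsSeg N s₂ ∧ zlt s₁.1 s₂.1 ∧ zlt s₁.2 s₂.2

/-- Componentwise covering of two length-`l` tuples: `𝐬 ▷ 𝐬'`. -/
def CoversMulti (N l : ℕ) (s s' : ℕ → ℚ × ℚ) : Prop :=
  ∀ m, m < l → Covers N (s m) (s' m)

/-- `𝐬 ▷_p 𝐬'` for length-`l` tuples: `𝐬(0, l−k) ▷ 𝐬'(k, l)` for all `0 ≤ k ≤ p`. -/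
def CoversP (N l p : ℕ) (s s' : ℕ → ℚ × ℚ) : Prop :=
  ∀ k, k ≤ p → ∀ m, m + k < l → Covers N (s m) (s' (m + k))

/-- `p` is an MY path for the segment `s` (`h = N + 1`; only values on `{0, …, h}` matter). -/
def IsMYPath (N : ℕ) (s : ℚ × ℚ) (p : ℕ → ℤ) : Prop :=
  (∀ k, k < N + 1 → p (k + 1) = p k + 1 ∨ p (k + 1) = p k - 1) ∧
  (p 0 : ℚ) = 2 * s.2 ∧ (p (N + 1) : ℚ) = ((N : ℚ) + 1) + 2 * s.1

/-- `s_{p,k} = [(p(k) - k)/2, (p(k) + k)/2]`. -/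
def pathSeg (p : ℕ → ℤ) (k : ℕ) : ℚ × ℚ :=
  (((p k : ℚ) - (k : ℚ)) / 2, ((p k : ℚ) + (k : ℚ)) / 2)

/-- `c_p^-` : segments at the local maxima of `p` in `[1, N]`. -/
def cMinus (N : ℕ) (p : ℕ → ℤ) : Set (ℚ × ℚ) :=
  {t | ∃ k, 1 ≤ k ∧ k ≤ N ∧ t = pathSeg p k ∧ p (k - 1) = p k - 1 ∧ p (k + 1) = p k - 1}

/-- `c_p^+` : segments at the local minima of `p` in `[1, N]`. -/
def cPlus (N : ℕ) (p : ℕ → ℤ) : Set (ℚ × ℚ) :=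
  {t | ∃ k, 1 ≤ k ∧ k ≤ N ∧ t = pathSeg p k ∧ p (k - 1) = p k + 1 ∧ p (k + 1) = p k + 1}

/-- `c_s^- = ⋃_{p ∈ ℙ_s} c_p^-`. -/
def cSegMinus (N : ℕ) (s : ℚ × ℚ) : Set (ℚ × ℚ) :=
  {t | ∃ p, IsMYPath N s p ∧ t ∈ cMinus N p}

/-- `c_s^+ = ⋃_{p ∈ ℙ_s} c_p^+`. -/
def cSegPlus (N : ℕ) (s : ℚ × ℚ) : Set (ℚ × ℚ) :=
  {t | ∃ p, IsMYPath N s p ∧ t ∈ cPlus N p}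

/-- `(p 0, …, p (l-1)) ∈ ℙ_𝐬` for the length-`l` tuple `𝐬`. -/
def IsPathTuple (N l : ℕ) (s : ℕ → ℚ × ℚ) (p : ℕ → ℕ → ℤ) : Prop :=
  (∀ m, m < l → IsMYPath N (s m) (p m)) ∧
  ∀ m n, m < n → n < l → ∀ k, k ≤ N + 1 → p m k < p n k

/-- The highest path `p_s(k) = spar(s) + |k - supp(s)|` (rational-valued formula). -/
def highestPath (s : ℚ × ℚ) (k : ℚ) : ℚ := spar s + |k - supp s|

/-- The lowest path `p_s^*(k) = spar(s) + h - |k - (h - supp(s))|` (rational-valued formula). -/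
def lowestPath (N : ℕ) (s : ℚ × ℚ) (k : ℚ) : ℚ :=
  spar s + ((N : ℚ) + 1) - |k - (((N : ℚ) + 1) - supp s)|

/-- `Small N s₁' t` : `spar(t) ≤ spar(*s₁') - |supp(t) - supp(*s₁')|` (integrality order). -/
def Small (N : ℕ) (s₁' t : ℚ × ℚ) : Prop :=
  zle (spar t) (spar (ldual N s₁') - |supp t - supp (ldual N s₁')|)

/-- `(s₁, s₂)` and `(s₁', s₂')` are ladders and `(s₁, s₂) ▷₁ (s₁', s₂')`. -/
def Pair1Cover (N : ℕ) (s₁ s₁' s₂ s₂' : ℚ × ℚ) : Prop :=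
  IsLadder2 N s₁ s₂ ∧ IsLadder2 N s₁' s₂' ∧
  Covers N s₁ s₁' ∧ Covers N s₂ s₂' ∧ Covers N s₁ s₂'

/-! A step of a path changes `p` by at most `1`, so `p` is 1-Lipschitz. The endpoints of `s_{p,k}`
are `(p k - k) / 2` and `(p k + k) / 2`; if both of them increase strictly from `a` to `b`, then
`p b - p a` exceeds both `b - a` and `a - b`, which contradicts the Lipschitz bound. -/

theorem lipschitzOnWith_Iic_of_dist_succ_le {α : Type*} [PseudoMetricSpace α] {u : ℕ → α}
    {K : NNReal} {n : ℕ} (hu : ∀ k < n, dist (u k) (u (k + 1)) ≤ K) :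
    LipschitzOnWith K u (Set.Iic n) := by
  refine LipschitzOnWith.of_dist_le_mul fun a ha b hb => ?_
  wlog hab : a ≤ b generalizing a b
  · rw [dist_comm (u a), dist_comm a]
    exact this b hb a ha (le_of_not_ge hab)
  calc dist (u a) (u b) ≤ ∑ _k ∈ Finset.Ico a b, (K : ℝ) :=
        dist_le_Ico_sum_of_dist_le hab fun _ hkb => hu _ (hkb.trans_le hb)
    _ = K * dist a b := by
        rw [Finset.sum_const, Nat.card_Ico, nsmul_eq_mul, Nat.cast_sub hab, mul_comm,
          dist_comm, Nat.dist_eq, abs_of_nonneg (sub_nonneg.2 (Nat.cast_le.2 hab))]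

theorem IsMYPath.lipschitzOnWith {N : ℕ} {s : ℚ × ℚ} {p : ℕ → ℤ} (hp : IsMYPath N s p) :
    LipschitzOnWith 1 p (Set.Iic (N + 1)) :=
  lipschitzOnWith_Iic_of_dist_succ_le fun k hk => by
    rcases hp.1 k hk with h | h <;> simp [h]

theorem not_pathSeg_fst_lt_and_snd_lt {p : ℕ → ℤ} {A : Set ℕ} (hp : LipschitzOnWith 1 p A)
    {a b : ℕ} (ha : a ∈ A) (hb : b ∈ A) :
    ¬((pathSeg p a).1 < (pathSeg p b).1 ∧ (pathSeg p a).2 < (pathSeg p b).2) := by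
  rintro ⟨hfst, hsnd⟩
  have hlip : |(p b : ℚ) - p a| ≤ |(b : ℚ) - a| := by
    have h := hp.dist_le_mul b hb a ha
    rw [NNReal.coe_one, one_mul, Int.dist_eq, Nat.dist_eq] at h
    exact_mod_cast h
  have hgap : |(b : ℚ) - a| < p b - p a := by
    simp only [pathSeg] at hfst hsnd
    exact abs_lt.2 ⟨by linarith, by linarith⟩
  exact (hgap.trans_le (le_abs_self _)).not_ge hlip

theorem zlt.lt {a b : ℚ} (h : zlt a b) : a < b := by
  obtain ⟨n, hn, hab⟩ := h
  exact sub_pos.1 (hab ▸ Int.cast_pos.2 hn)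

theorem IsLadder.strictMonoOn_fst {N l : ℕ} {s : ℕ → ℚ × ℚ} (hs : IsLadder N l s) :
    StrictMonoOn (fun k => (s k).1) (Set.Iio l) :=
  fun k _ m hm hkm => (hs.2 k m hkm hm).1.lt

theorem IsLadder.strictMonoOn_snd {N l : ℕ} {s : ℕ → ℚ × ℚ} (hs : IsLadder N l s) :
    StrictMonoOn (fun k => (s k).2) (Set.Iio l) :=
  fun k _ m hm hkm => (hs.2 k m hkm hm).2.lt

theorem cPlus_subset_image_pathSeg (N : ℕ) (p : ℕ → ℤ) :
    cPlus N p ⊆ pathSeg p '' Set.Iic (N + 1) := by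
  rintro _ ⟨k, -, hk, rfl, -⟩
  exact ⟨k, hk.trans N.le_succ, rfl⟩

theorem cMinus_subset_image_pathSeg (N : ℕ) (p : ℕ → ℤ) :
    cMinus N p ⊆ pathSeg p '' Set.Iic (N + 1) := by
  rintro _ ⟨k, -, hk, rfl, -⟩
  exact ⟨k, hk.trans N.le_succ, rfl⟩

theorem ladder_at_most_one_corner_general {ι : Type*} [LinearOrder ι] {p : ℕ → ℤ} {A : Set ℕ}
    (hp : LipschitzOnWith 1 p A) {s : ι → ℚ × ℚ} {I : Set ι}
    (hfst : StrictMonoOn (fun k => (s k).1) I) (hsnd : StrictMonoOn (fun k => (s k).2) I) :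
    {k ∈ I | s k ∈ pathSeg p '' A}.Subsingleton := by
  rintro k ⟨hk, a, ha, hka⟩ m ⟨hm, b, hb, hmb⟩
  by_contra hne
  wlog hkm : k < m generalizing k m a b
  · exact this hm b hb hmb hk a ha hka (Ne.symm hne)
      (lt_of_le_of_ne (not_lt.1 hkm) (Ne.symm hne))
  refine not_pathSeg_fst_lt_and_snd_lt hp ha hb ?_
  rw [hka, hmb]
  exact ⟨hfst hk hm hkm, hsnd hk hm hkm⟩

/-- If `p` is an MY path for a segment `s₀` and `(s₁, …, s_l)` is a ladder, then at most
one entry of the ladder lies in `c_p^+`, and at most one lies in `c_p^-`. -/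
theorem ladder_at_most_one_corner (N : ℕ) (hN : 1 ≤ N) (s₀ : ℚ × ℚ) (hs₀ : IsSeg N s₀)
    (p : ℕ → ℤ) (hp : IsMYPath N s₀ p) (l : ℕ) (s : ℕ → ℚ × ℚ)
    (hlad : IsLadder N l s) :
    (∀ k m, k < l → m < l → s k ∈ cPlus N p → s m ∈ cPlus N p → k = m) ∧
    (∀ k m, k < l → m < l → s k ∈ cMinus N p → s m ∈ cMinus N p → k = m) := by
  have hsub := ladder_at_most_one_corner_general hp.lipschitzOnWith hlad.strictMonoOn_fst
    hlad.strictMonoOn_snd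
  exact ⟨fun k m hk hm hsk hsm => hsub ⟨hk, cPlus_subset_image_pathSeg N p hsk⟩
      ⟨hm, cPlus_subset_image_pathSeg N p hsm⟩,
    fun k m hk hm hsk hsm => hsub ⟨hk, cMinus_subset_image_pathSeg N p hsk⟩
      ⟨hm, cMinus_subset_image_pathSeg N p hsm⟩⟩

end SnakePaper
end

section
/- Let s₀ be a segment, p ∈ ℙ_{s₀} an MY path for s₀, and let s be a segment with s ∉ c_p. If p(supp(s)) ≤ spar(s), p(supp(s)) − supp(s) < p(0), and p(supp(s)) − (h − supp(s)) < p(h), then there exists a segment s' ∈ c_p^+ with spar(s') < spar(s). -/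
namespace SnakePaper

/-!
Put `h = N + 1` and `n = supp s`. If `p` steps down when leaving `n` to the right, it must turn
upwards before reaching `h`, since a straight descent would end at `p n - (h - n) < p h`; its first
turn is a local minimum below `p n`. Reversing the path gives the same on the left. If `p` steps
down on neither side, then `n` itself is a local minimum, and `p n < spar s`: equality would
make `s` the segment of `c_p^+` attached to `n`.
-/

/-- `p` is a `±1` path on `{0, …, h}`: the step condition of an MY path, without the endpoints. -/
def IsUnitStep (h : ℕ) (p : ℕ → ℤ) : Prop :=
  ∀ k, k < h → p (k + 1) = p k + 1 ∨ p (k + 1) = p k - 1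

/-- `p` has a strict local minimum at the interior point `k` of `{0, …, h}`. The segments attached
to these points by `pathSeg` form `c_p^+` when `h = N + 1`. -/
def IsValley (h : ℕ) (p : ℕ → ℤ) (k : ℕ) : Prop :=
  0 < k ∧ k < h ∧ p (k - 1) = p k + 1 ∧ p (k + 1) = p k + 1

section Path

variable {h n : ℕ} {p : ℕ → ℤ}

lemma IsUnitStep.reverse (hp : IsUnitStep h p) : IsUnitStep h (fun k ↦ p (h - k)) := by
  intro k hk
  have hstep := hp (h - (k + 1)) (by lia)
  rw [show h - (k + 1) + 1 = h - k by lia] at hstep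
  lia

lemma IsValley.of_reverse {k : ℕ} (hk : IsValley h (fun k ↦ p (h - k)) k) :
    IsValley h p (h - k) := by
  obtain ⟨hk0, hkh, hleft, hright⟩ := hk
  refine ⟨by lia, by lia, ?_, ?_⟩
  · rwa [show h - k - 1 = h - (k + 1) by lia]
  · rwa [show h - k + 1 = h - (k - 1) by lia]

lemma eq_sub_of_forall_step_down {m : ℕ} (hnm : n ≤ m)
    (hdown : ∀ k, n ≤ k → k < m → p (k + 1) = p k - 1) : p m = p n - (m - n) := by
  induction m, hnm using Nat.le_induction with
  | base => ring
  | succ m hnm ih =>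
    rw [hdown m hnm m.lt_succ_self, ih fun k hnk hkm ↦ hdown k hnk (hkm.trans m.lt_succ_self)]
    push_cast
    ring

lemma IsUnitStep.exists_isValley_of_step_down (hp : IsUnitStep h p) (hn : n < h)
    (hdown : p (n + 1) = p n - 1) (hend : p n - (h - n) < p h) :
    ∃ k, IsValley h p k ∧ p k < p n := by
  have hturn : ∃ k, n ≤ k ∧ k < h ∧ p (k + 1) ≠ p k - 1 := by
    by_contra! hstraight
    exact hend.ne (eq_sub_of_forall_step_down hn.le hstraight).symm
  classical
  obtain ⟨hnk, hkh, hup⟩ := Nat.find_spec hturn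
  have hbefore : ∀ m, n ≤ m → m < Nat.find hturn → p (m + 1) = p m - 1 := fun m hnm hmk ↦
    of_not_not fun hne ↦ Nat.find_min hturn hmk ⟨hnm, hmk.trans hkh, hne⟩
  generalize Nat.find hturn = k at hnk hkh hup hbefore
  have hlt : n < k := hnk.lt_of_ne fun heq ↦ hup (heq ▸ hdown)
  have hvalue : p k = p n - (k - n) := eq_sub_of_forall_step_down hnk hbefore
  have hlast : p k = p (k - 1) - 1 := by
    simpa only [Nat.sub_add_cancel (Nat.one_le_of_lt hlt)] using
      hbefore (k - 1) (by lia) (by lia)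
  exact ⟨k, ⟨by lia, hkh, by lia, (hp k hkh).resolve_right hup⟩, by lia⟩

lemma IsUnitStep.exists_isValley_of_step_up (hp : IsUnitStep h p) (hn0 : 0 < n) (hn : n ≤ h)
    (hup : p n = p (n - 1) + 1) (hstart : p n - n < p 0) :
    ∃ k, IsValley h p k ∧ p k < p n := by
  have hdown : p (h - (h - n + 1)) = p (h - (h - n)) - 1 := by
    rw [show h - (h - n + 1) = n - 1 by lia, Nat.sub_sub_self hn]
    lia
  have hend : p (h - (h - n)) - (h - (h - n : ℕ)) < p (h - h) := by
    rw [Nat.sub_sub_self hn, Nat.sub_self, Nat.cast_sub hn]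
    lia
  obtain ⟨k, hk, hlt⟩ := hp.reverse.exists_isValley_of_step_down (by lia) hdown hend
  exact ⟨h - k, hk.of_reverse, by rwa [Nat.sub_sub_self hn] at hlt⟩

lemma IsUnitStep.isValley_or_exists_lt (hp : IsUnitStep h p) (hn : n ≤ h)
    (hstart : p n - n < p 0) (hend : p n - (h - n) < p h) :
    IsValley h p n ∨ ∃ k, IsValley h p k ∧ p k < p n := by
  have hn0 : 0 < n := Nat.pos_of_ne_zero (by rintro rfl; simp at hstart)
  have hnh : n < h := hn.lt_of_ne (by rintro rfl; simp at hend)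
  rcases hp n hnh with hright | hright
  · have hstep := hp (n - 1) (by lia)
    rw [Nat.sub_add_cancel hn0] at hstep
    rcases hstep with hleft | hleft
    · exact .inr (hp.exists_isValley_of_step_up hn0 hn hleft hstart)
    · exact .inl ⟨hn0, hnh, by lia, hright⟩
  · exact .inr (hp.exists_isValley_of_step_down hnh hright hend)

end Path

section Segment

variable {N : ℕ} {p : ℕ → ℤ} {s : ℚ × ℚ}

lemma IsSeg.supp_le (hs : IsSeg N s) : supp s ≤ N + 1 := by
  obtain ⟨-, m, hm, -, hle⟩ := hs
  exact hm.trans_le hle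

lemma IsValley.pathSeg_mem_cPlus {k : ℕ} (hk : IsValley (N + 1) p k) : pathSeg p k ∈ cPlus N p :=
  ⟨k, hk.1, Nat.le_of_lt_succ hk.2.1, rfl, hk.2.2⟩

@[simp]
lemma spar_pathSeg (p : ℕ → ℤ) (k : ℕ) : spar (pathSeg p k) = p k := by
  simp only [spar, pathSeg]
  ring

lemma pathSeg_eq_of_supp_of_spar {n : ℕ} (hsupp : n = supp s) (hspar : p n = spar s) :
    pathSeg p n = s := by
  ext <;> simp only [pathSeg, hsupp, hspar, supp, spar] <;> ring

end Segment

theorem exists_smaller_min_general {N : ℕ} {p : ℕ → ℤ} (hp : IsUnitStep (N + 1) p) {s : ℚ × ℚ}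
    (hs : supp s ≤ N + 1) (hnot : s ∉ cPlus N p) {n : ℕ} (hn : n = supp s) (hle : p n ≤ spar s)
    (hstart : p n - supp s < p 0) (hend : p n - ((N + 1) - supp s) < p (N + 1)) :
    ∃ s' ∈ cPlus N p, spar s' < spar s := by
  rw [← hn] at hs hstart hend
  norm_cast at hs hstart
  have hend' : p n - ((N + 1 : ℕ) - n) < p (N + 1) := mod_cast hend
  rcases hp.isValley_or_exists_lt hs hstart hend' with hvalley | ⟨k, hvalley, hlt⟩
  · refine ⟨pathSeg p n, hvalley.pathSeg_mem_cPlus, ?_⟩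
    have hne : (p n : ℚ) ≠ spar s := fun heq ↦
      hnot (pathSeg_eq_of_supp_of_spar hn heq ▸ hvalley.pathSeg_mem_cPlus)
    simpa only [spar_pathSeg] using hle.lt_of_ne hne
  · refine ⟨pathSeg p k, hvalley.pathSeg_mem_cPlus, ?_⟩
    rw [spar_pathSeg]
    exact lt_of_lt_of_le (mod_cast hlt) hle

/-- If `p` is an MY path for `s₀`, `s` is a segment not in `c_p = c_p^+ ∪ c_p^-`,
`p(supp(s)) ≤ spar(s)`, `p(supp(s)) − supp(s) < p(0)` and
`p(supp(s)) − (h − supp(s)) < p(h)`, then there is `s' ∈ c_p^+` with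
`spar(s') < spar(s)`. -/
theorem exists_smaller_min (N : ℕ) (hN : 1 ≤ N) (s₀ : ℚ × ℚ) (hs₀ : IsSeg N s₀)
    (p : ℕ → ℤ) (hp : IsMYPath N s₀ p) (s : ℚ × ℚ) (hs : IsSeg N s)
    (hnot : s ∉ cPlus N p ∪ cMinus N p)
    (n : ℕ) (hn : (n : ℚ) = supp s)
    (h1 : (p n : ℚ) ≤ spar s)
    (h2 : (p n : ℚ) - supp s < (p 0 : ℚ))
    (h3 : (p n : ℚ) - (((N : ℚ) + 1) - supp s) < (p (N + 1) : ℚ)) :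
    ∃ s' ∈ cPlus N p, spar s' < spar s :=
  exists_smaller_min_general hp.1 hs.supp_le (fun hmem ↦ hnot (.inl hmem)) hn h1 h2 h3

end SnakePaper
end

section
/- Let s = [i, j] be a segment. Then c_s^+ equals the set of all segments [m, n] with i ≤ m < j ≤ n < h + i, and c_s^− equals the set of all segments [m, n] with i < m ≤ j < n ≤ h + i (all inequalities with the integrality convention). -/
namespace SnakePaper

/-!
Let `t = [m, n]` and `k = n - m`. A path has `t` at a local minimum exactly when it runs from
`2j` to `m + n + 1` in `k - 1` steps, goes down and up once, and then runs from `m + n + 1` to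
`h + 2i` in `h - k - 1` steps. A run with `u` up-steps and `d` down-steps exists for any `u` and `d`,
and its length and displacement determine them: the first run has `u = n - j`, `d = j - m - 1`, the
second `u' = h + i - n - 1`, `d' = m - i`. Nonnegativity of these four numbers is the description of
`c_s^+`. Negating a path exchanges local maxima and minima, which turns `c_s^+` into `c_s^-`.
-/

section UnitWalk

/-- `p` is a lattice walk with steps `±1` on `{0, …, n}`; as in `IsMYPath`, the values of `p`
beyond `n` are irrelevant. -/
def IsUnitWalk (n : ℕ) (p : ℕ → ℤ) : Prop :=
  ∀ k, k < n → p (k + 1) = p k + 1 ∨ p (k + 1) = p k - 1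

/-- `b` can be reached from `a` by a walk with exactly `n` steps `±1`. -/
def ReachableIn (n : ℕ) (a b : ℤ) : Prop :=
  ∃ p, IsUnitWalk n p ∧ p 0 = a ∧ p n = b

variable {m n : ℕ} {a b c : ℤ} {p : ℕ → ℤ}

theorem IsUnitWalk.mono (hp : IsUnitWalk n p) (hmn : m ≤ n) : IsUnitWalk m p :=
  fun k hk ↦ hp k (hk.trans_le hmn)

theorem IsUnitWalk.drop (hp : IsUnitWalk (m + n) p) : IsUnitWalk n fun k ↦ p (m + k) :=
  fun k hk ↦ hp (m + k) (Nat.add_lt_add_left hk m)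

theorem IsUnitWalk.neg (hp : IsUnitWalk n p) : IsUnitWalk n (-p) := by
  intro k hk
  have := hp k hk
  simp only [Pi.neg_apply]
  omega

theorem IsUnitWalk.exists_eq_add_sub (hp : IsUnitWalk n p) :
    ∃ u d : ℕ, u + d = n ∧ p n = p 0 + u - d := by
  induction n with
  | zero => exact ⟨0, 0, rfl, by simp⟩
  | succ n ih =>
    obtain ⟨u, d, hlen, hend⟩ := ih (hp.mono n.le_succ)
    rcases hp n n.lt_succ_self with hup | hdown
    · exact ⟨u + 1, d, by omega, by omega⟩
    · exact ⟨u, d + 1, by omega, by omega⟩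

theorem reachableIn_iff : ReachableIn n a b ↔ ∃ u d : ℕ, u + d = n ∧ b = a + u - d := by
  constructor
  · rintro ⟨p, hp, rfl, rfl⟩
    exact hp.exists_eq_add_sub
  · rintro ⟨u, d, rfl, rfl⟩
    -- All the up-steps come first.
    refine ⟨fun x ↦ a + min (x : ℤ) (2 * u - x), ?_, ?_, ?_⟩
    · intro x _
      dsimp only
      omega
    all_goals dsimp only; omega

theorem exists_isUnitWalk_localMin_iff :
    (∃ p, IsUnitWalk (m + 2 + n) p ∧ p 0 = a ∧ p (m + 2 + n) = b ∧
      p (m + 1) = c ∧ p m = c + 1 ∧ p (m + 2) = c + 1) ↔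
    ReachableIn m a (c + 1) ∧ ReachableIn n (c + 1) b := by
  constructor
  · rintro ⟨p, hp, h0, hend, -, hleft, hright⟩
    exact ⟨⟨p, hp.mono (by omega), h0, hleft⟩, ⟨_, hp.drop, hright, hend⟩⟩
  · rintro ⟨⟨p, hp, hp0, hpm⟩, ⟨q, hq, hq0, hqn⟩⟩
    let r : ℕ → ℤ := fun x ↦ if x ≤ m then p x else if x = m + 1 then c else q (x - (m + 2))
    have r_left {x : ℕ} (hx : x ≤ m) : r x = p x := if_pos hx
    have r_mid : r (m + 1) = c := by simp [r]
    have r_right (x : ℕ) : r (m + 2 + x) = q x := by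
      simp only [r, if_neg (show ¬ m + 2 + x ≤ m by omega),
        if_neg (show m + 2 + x ≠ m + 1 by omega), Nat.add_sub_cancel_left]
    have r_m : r m = c + 1 := (r_left le_rfl).trans hpm
    have r_m2 : r (m + 2) = c + 1 := (r_right 0).trans hq0
    refine ⟨r, fun x hx ↦ ?_, (r_left m.zero_le).trans hp0, (r_right n).trans hqn,
      r_mid, r_m, r_m2⟩
    obtain hlt | rfl | rfl | hge : x < m ∨ x = m ∨ x = m + 1 ∨ m + 2 ≤ x := by omega
    · rw [r_left hlt.le, r_left hlt]
      exact hp x hlt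
    · rw [r_mid, r_m]
      omega
    · rw [r_mid, r_m2]
      omega
    · obtain ⟨y, rfl⟩ := Nat.exists_eq_add_of_le hge
      rw [r_right, add_assoc, r_right]
      exact hq y (by omega)

end UnitWalk

section IntegralOrder

variable {a b : ℚ}

theorem zle_iff_exists_nat : zle a b ↔ ∃ n : ℕ, b - a = n := by
  constructor
  · rintro ⟨n, hn, h⟩
    lift n to ℕ using hn
    exact ⟨n, h⟩
  · rintro ⟨n, h⟩
    exact ⟨n, n.cast_nonneg, h⟩

theorem zlt_iff_exists_nat : zlt a b ↔ ∃ n : ℕ, b - a = n + 1 := by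
  constructor
  · rintro ⟨n, hn, h⟩
    obtain ⟨k, rfl⟩ := Int.eq_succ_of_zero_lt hn
    exact ⟨k, by simpa using h⟩
  · rintro ⟨n, h⟩
    exact ⟨n + 1, by omega, by simpa using h⟩

theorem zle_neg_iff : zle (-b) (-a) ↔ zle a b := by
  simp only [zle, neg_sub_neg]

theorem zlt_neg_iff : zlt (-b) (-a) ↔ zlt a b := by
  simp only [zlt, neg_sub_neg]

end IntegralOrder

section Segments

variable {N : ℕ} {s t : ℚ × ℚ}

theorem eq_pathSeg_iff {p : ℕ → ℤ} {k : ℕ} : t = pathSeg p k ↔ spar t = p k ∧ supp t = k := by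
  simp only [Prod.ext_iff, pathSeg, spar, supp]
  constructor <;> rintro ⟨h₁, h₂⟩ <;> constructor <;> linarith

theorem mem_cSegPlus_iff_reachableIn :
    t ∈ cSegPlus N s ↔ ∃ (m n : ℕ) (a b c : ℤ), m + 1 + n = N ∧ supp t = m + 1 ∧ spar t = c ∧
      (a : ℚ) = 2 * s.2 ∧ (b : ℚ) = N + 1 + 2 * s.1 ∧
      ReachableIn m a (c + 1) ∧ ReachableIn n (c + 1) b := by
  constructor
  · rintro ⟨p, ⟨hp, h0, hend⟩, k, hk, hkN, ht, hleft, hright⟩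
    obtain ⟨m, rfl⟩ := Nat.exists_eq_add_of_le' hk
    obtain ⟨n, rfl⟩ := Nat.exists_eq_add_of_le hkN
    obtain ⟨hspar, hsupp⟩ := eq_pathSeg_iff.mp ht
    have hlen : m + 1 + n + 1 = m + 2 + n := by omega
    exact ⟨m, n, p 0, p (m + 1 + n + 1), p (m + 1), rfl, mod_cast hsupp, hspar, h0, hend,
      exists_isUnitWalk_localMin_iff.mp ⟨p, hlen ▸ hp, rfl, by rw [hlen], rfl, hleft, hright⟩⟩
  · rintro ⟨m, n, a, b, c, rfl, hsupp, hspar, h0, hend, hreach⟩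
    obtain ⟨p, hp, rfl, rfl, rfl, hleft, hright⟩ := exists_isUnitWalk_localMin_iff.mpr hreach
    have hlen : m + 2 + n = m + 1 + n + 1 := by omega
    rw [hlen] at hp hend
    exact ⟨p, ⟨hp, h0, hend⟩, m + 1, by omega, by omega,
      eq_pathSeg_iff.mpr ⟨hspar, mod_cast hsupp⟩, hleft, hright⟩

theorem cSegPlus_eq (N : ℕ) (s : ℚ × ℚ) :
    cSegPlus N s = {t | IsSeg N t ∧ zle s.1 t.1 ∧ zlt t.1 s.2 ∧ zle s.2 t.2 ∧
      zlt t.2 ((N : ℚ) + 1 + s.1)} := by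
  ext t
  simp only [mem_cSegPlus_iff_reachableIn, Set.mem_ofPred_eq, zle_iff_exists_nat,
    zlt_iff_exists_nat, reachableIn_iff, supp, spar]
  constructor
  · rintro ⟨m, n, a, b, c, rfl, hsupp, hspar, ha, hb, ⟨u, d, rfl, hc⟩, ⟨u', d', rfl, rfl⟩⟩
    have hcq : (c : ℚ) + 1 = a + u - d := mod_cast hc
    push_cast at hsupp hb ⊢
    refine ⟨⟨⟨c - (u + d + 1), ?_⟩, ⟨u + d + 1, ?_, by omega, ?_⟩⟩,
      ⟨d', ?_⟩, ⟨d, ?_⟩, ⟨u, ?_⟩, ⟨u', ?_⟩⟩ <;> push_cast <;> linarith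
  · rintro ⟨⟨⟨M, hM⟩, -⟩, ⟨d', hd'⟩, ⟨d, hd⟩, ⟨u, hu⟩, ⟨u', hu'⟩⟩
    have hlen : u + d + 1 + (u' + d') = N := by
      have : (u : ℚ) + d + 1 + (u' + d') = N := by linarith
      exact_mod_cast this
    refine ⟨u + d, u' + d', M + 2 * d + 2, N + 1 + M - 2 * d', M + u + d + 1, hlen, ?_, ?_, ?_, ?_,
      ⟨u, d, rfl, by ring⟩, ⟨u', d', rfl, by omega⟩⟩ <;> push_cast <;> linarith

/-- The segment `-s = [-j, -i]` opposite to `s = [i, j]`; this is how segments at points of a path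
transform when the path is negated. -/
def segNeg (s : ℚ × ℚ) : ℚ × ℚ := (-s.2, -s.1)

theorem segNeg_segNeg (s : ℚ × ℚ) : segNeg (segNeg s) = s := by
  simp only [segNeg, neg_neg]

theorem segNeg_pathSeg (p : ℕ → ℤ) (k : ℕ) : segNeg (pathSeg p k) = pathSeg (-p) k := by
  ext <;> simp only [segNeg, pathSeg, Pi.neg_apply, Int.cast_neg] <;> ring

theorem segNeg_eq_pathSeg_neg_iff {p : ℕ → ℤ} {k : ℕ} :
    segNeg t = pathSeg (-p) k ↔ t = pathSeg p k := by
  rw [← segNeg_pathSeg, (Function.LeftInverse.injective segNeg_segNeg).eq_iff]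

theorem isSeg_segNeg_iff : IsSeg N (segNeg t) ↔ IsSeg N t := by
  have isSeg_segNeg {t : ℚ × ℚ} : IsSeg N t → IsSeg N (segNeg t) := by
    rintro ⟨⟨m, hm⟩, n, hn, hn0, hnN⟩
    refine ⟨⟨-m - 2 * n, ?_⟩, n, ?_, hn0, hnN⟩ <;> simp only [segNeg] <;> push_cast <;> linarith
  exact ⟨fun h ↦ segNeg_segNeg t ▸ isSeg_segNeg h, isSeg_segNeg⟩

theorem isMYPath_neg_iff {p : ℕ → ℤ} :
    IsMYPath N (segNeg (ldual N s)) (-p) ↔ IsMYPath N s p := by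
  have hwalk : IsUnitWalk (N + 1) (-p) ↔ IsUnitWalk (N + 1) p :=
    ⟨fun h ↦ neg_neg p ▸ h.neg, IsUnitWalk.neg⟩
  refine and_congr hwalk (and_congr ?_ ?_) <;>
    simp only [segNeg, ldual, Pi.neg_apply, Int.cast_neg] <;> constructor <;> intro h <;> linarith

theorem segNeg_mem_cPlus_neg_iff {p : ℕ → ℤ} : segNeg t ∈ cPlus N (-p) ↔ t ∈ cMinus N p := by
  have neg_eq_neg_add_one_iff (a b : ℤ) : -a = -b + 1 ↔ a = b - 1 := by omega
  simp only [cPlus, cMinus, Set.mem_ofPred_eq, segNeg_eq_pathSeg_neg_iff, Pi.neg_apply,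
    neg_eq_neg_add_one_iff]

theorem segNeg_mem_cSegPlus_iff :
    segNeg t ∈ cSegPlus N (segNeg (ldual N s)) ↔ t ∈ cSegMinus N s := by
  refine ((Equiv.neg (ℕ → ℤ)).exists_congr fun p ↦ ?_).symm
  exact and_congr isMYPath_neg_iff.symm segNeg_mem_cPlus_neg_iff.symm

theorem cSegMinus_eq (N : ℕ) (s : ℚ × ℚ) :
    cSegMinus N s = {t | IsSeg N t ∧ zlt s.1 t.1 ∧ zle t.1 s.2 ∧ zlt s.2 t.2 ∧
      zle t.2 ((N : ℚ) + 1 + s.1)} := by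
  ext t
  have hadd : (N : ℚ) + 1 + -(N + 1 + s.1) = -s.1 := by ring
  rw [← segNeg_mem_cSegPlus_iff, cSegPlus_eq, Set.mem_ofPred_eq, isSeg_segNeg_iff]
  simp only [segNeg, ldual, hadd, zle_neg_iff, zlt_neg_iff, add_comm s.1 (_ + _), Set.mem_ofPred_eq]
  tauto

end Segments

/-- For a segment `s = [i, j]`, `c_s^+` is the set of all segments `[m, n]` with
`i ≤ m < j ≤ n < h + i`, and `c_s^-` is the set of all segments `[m, n]` with
`i < m ≤ j < n ≤ h + i` (integrality order). -/
theorem cSeg_characterization (N : ℕ) (hN : 1 ≤ N) (s : ℚ × ℚ) (hs : IsSeg N s) :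
    cSegPlus N s =
      {t : ℚ × ℚ | IsSeg N t ∧ zle s.1 t.1 ∧ zlt t.1 s.2 ∧ zle s.2 t.2 ∧
        zlt t.2 (((N : ℚ) + 1) + s.1)} ∧
    cSegMinus N s =
      {t : ℚ × ℚ | IsSeg N t ∧ zlt s.1 t.1 ∧ zle t.1 s.2 ∧ zlt s.2 t.2 ∧
        zle t.2 (((N : ℚ) + 1) + s.1)} :=
  ⟨cSegPlus_eq N s, cSegMinus_eq N s⟩

end SnakePaper
end

section
/- Let 𝐬 = (s₁, …, s_l) be a tuple of segments and let p_m ∈ ℙ_{s_m} for each 1 ≤ m ≤ l. Suppose that one of the following holds: (a) there exist 1 ≤ k < l and a segment s such that c_{p_k}^− = {s}, p_{k+1} = p_{s_{k+1}} is the highest path of ℙ_{s_{k+1}}, and spar(s) − spar(s_{k+1}) ≥ |supp(s) − supp(s_{k+1})|; or (b) there exist 1 ≤ k < m ≤ l and segments s, s' such that (s, s') is a ladder (of length 2), c_{p_k}^− = {s'}, and c_{p_m}^− = {s}. Then (p₁, …, p_l) ∉ ℙ_𝐬. -/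
namespace SnakePaper

/-! A step of an MY path moves one endpoint of `s_{p,k} = [(p(k) - k)/2, (p(k) + k)/2]` and fixes
the other: going right, the left endpoint can only decrease and the right one can only increase.
Order segments by comparing both endpoints. If a segment `s_{q,j}` of an MY path `q` satisfies
`s_{q,j} ≤ s_{p,i}`, then moving along `q` from `j` to `i` does not increase one endpoint, so
`q(i) ≤ p(i)` and `q` is not strictly above `p`. Both (a) and (b) provide such a pair of segments;
for (a) this is because the highest path of `ℙ_s` passes through `s` itself, at `k = supp(s)`. -/

/-- The segments `s_{p,k}`, `0 ≤ k ≤ h`, through which `p` passes, used to compare two paths. Unlike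
for `c_p^±`, the ends `k = 0` and `k = h` are included: if `supp(s)` is `0` or `h`, the highest
path of `ℙ_s` meets `s` at an end. -/
def pathSegs (N : ℕ) (p : ℕ → ℤ) : Set (ℚ × ℚ) := pathSeg p '' Set.Iic (N + 1)

section Segments

variable {N : ℕ} {t u : ℚ × ℚ}

lemma abs_supp_sub_le_iff : |supp t - supp u| ≤ spar t - spar u ↔ u ≤ t := by
  simp only [abs_le, supp, spar, Prod.le_def]
  constructor <;> rintro ⟨h₁, h₂⟩ <;> constructor <;> linarith

lemma le_of_zlt {a b : ℚ} (h : zlt a b) : a ≤ b := by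
  obtain ⟨n, hn, hab⟩ := h
  rw [← sub_nonneg, hab]
  exact_mod_cast hn.le

lemma IsLadder2.le (h : IsLadder2 N t u) : t ≤ u :=
  ⟨le_of_zlt h.2.2.1, le_of_zlt h.2.2.2⟩

end Segments

section Paths

variable {N : ℕ} {s : ℚ × ℚ} {p : ℕ → ℤ}

lemma cMinus_subset_pathSegs : cMinus N p ⊆ pathSegs N p := by
  rintro _ ⟨k, -, hk, rfl, -⟩
  exact ⟨k, Nat.le_succ_of_le hk, rfl⟩

lemma mem_pathSegs_of_eq_highestPath (hs : IsSeg N s)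
    (hp : ∀ k : ℕ, k ≤ N + 1 → (p k : ℚ) = highestPath s k) : s ∈ pathSegs N p := by
  obtain ⟨-, n, hn, hn0, hnN⟩ := hs
  lift n to ℕ using hn0
  have hk : n ≤ N + 1 := by exact_mod_cast hnN
  have hsupp : (n : ℚ) = supp s := hn.symm
  have hspar : (p n : ℚ) = spar s := by simp [hp n hk, highestPath, hsupp]
  refine ⟨n, hk, Prod.ext ?_ ?_⟩ <;> simp only [pathSeg, hspar, hsupp, spar, supp] <;> ring

lemma IsMYPath.antitoneOn_pathSeg_fst (hp : IsMYPath N s p) :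
    AntitoneOn (fun k ↦ (pathSeg p k).1) (Set.Iic (N + 1)) := by
  refine antitoneOn_of_add_one_le Set.ordConnected_Iic fun k _ _ hk ↦ ?_
  have hstep : p (k + 1) ≤ p k + 1 := by have := hp.1 k hk; omega
  have hstep' : (p (k + 1) : ℚ) ≤ p k + 1 := by exact_mod_cast hstep
  simp only [pathSeg, Nat.cast_add_one]
  linarith

lemma IsMYPath.monotoneOn_pathSeg_snd (hp : IsMYPath N s p) :
    MonotoneOn (fun k ↦ (pathSeg p k).2) (Set.Iic (N + 1)) := by
  refine monotoneOn_of_le_add_one Set.ordConnected_Iic fun k _ _ hk ↦ ?_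
  have hstep : p k ≤ p (k + 1) + 1 := by have := hp.1 k hk; omega
  have hstep' : (p k : ℚ) ≤ p (k + 1) + 1 := by exact_mod_cast hstep
  simp only [pathSeg, Nat.cast_add_one]
  linarith

lemma pathSeg_fst_le_iff {q : ℕ → ℤ} {k : ℕ} :
    (pathSeg q k).1 ≤ (pathSeg p k).1 ↔ q k ≤ p k := by
  simp [pathSeg, div_le_div_iff_of_pos_right]

lemma pathSeg_snd_le_iff {q : ℕ → ℤ} {k : ℕ} :
    (pathSeg q k).2 ≤ (pathSeg p k).2 ↔ q k ≤ p k := by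
  simp [pathSeg, div_le_div_iff_of_pos_right]

lemma IsMYPath.le_of_pathSeg_le {q : ℕ → ℤ} (hq : IsMYPath N s q) {i j : ℕ} (hi : i ≤ N + 1)
    (hj : j ≤ N + 1) (hle : pathSeg q j ≤ pathSeg p i) : q i ≤ p i := by
  rcases le_total i j with hij | hji
  · exact pathSeg_snd_le_iff.1 ((hq.monotoneOn_pathSeg_snd hi hj hij).trans hle.2)
  · exact pathSeg_fst_le_iff.1 ((hq.antitoneOn_pathSeg_fst hj hi hji).trans hle.1)

end Paths

theorem not_pathTuple_general {N l : ℕ} {s : ℕ → ℚ × ℚ} {p : ℕ → ℕ → ℤ} {k m : ℕ} (hkm : k < m)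
    (hm : m < l) {t u : ℚ × ℚ} (ht : t ∈ pathSegs N (p k)) (hu : u ∈ pathSegs N (p m))
    (hle : u ≤ t) : ¬ IsPathTuple N l s p := by
  rintro ⟨hp, hlt⟩
  obtain ⟨i, hi, rfl⟩ := ht
  obtain ⟨j, hj, rfl⟩ := hu
  exact (hlt k m hkm hm i hi).not_ge ((hp m hm).le_of_pathSeg_le hi hj hle)

/-- Let `𝐬` be a tuple of segments and `p_m ∈ ℙ_{s_m}`. If either
(a) there are `k < l` and a segment `t` with `c_{p_k}^- = {t}`, `p_{k+1}` the highest
path of `ℙ_{s_{k+1}}`, and `spar(t) − spar(s_{k+1}) ≥ |supp(t) − supp(s_{k+1})|`; or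
(b) there are `k < m ≤ l` and a length-2 ladder `(t, t')` with `c_{p_k}^- = {t'}` and
`c_{p_m}^- = {t}`; then `(p₁, …, p_l) ∉ ℙ_𝐬`. -/
theorem not_pathTuple (N : ℕ) (hN : 1 ≤ N) (l : ℕ) (s : ℕ → ℚ × ℚ)
    (hseg : ∀ m, m < l → IsSeg N (s m))
    (p : ℕ → ℕ → ℤ) (hp : ∀ m, m < l → IsMYPath N (s m) (p m))
    (hab :
      (∃ k, k + 1 < l ∧ ∃ t : ℚ × ℚ,
        cMinus N (p k) = {t} ∧
        (∀ j : ℕ, j ≤ N + 1 → (p (k + 1) j : ℚ) = highestPath (s (k + 1)) (j : ℚ)) ∧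
        |supp t - supp (s (k + 1))| ≤ spar t - spar (s (k + 1))) ∨
      (∃ k m, k < m ∧ m < l ∧ ∃ t t' : ℚ × ℚ,
        IsLadder2 N t t' ∧ cMinus N (p k) = {t'} ∧ cMinus N (p m) = {t})) :
    ¬ IsPathTuple N l s p := by
  rcases hab with ⟨k, hk, t, ht, hhigh, habs⟩ | ⟨k, m, hkm, hm, t, t', hlad, ht', ht⟩
  · exact not_pathTuple_general k.lt_succ_self hk (cMinus_subset_pathSegs (ht.ge rfl))
      (mem_pathSegs_of_eq_highestPath (hseg _ hk) hhigh) (abs_supp_sub_le_iff.1 habs)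
  · exact not_pathTuple_general hkm hm (cMinus_subset_pathSegs (ht'.ge rfl))
      (cMinus_subset_pathSegs (ht.ge rfl)) hlad.le

end SnakePaper
end

section
/- Let s₁ = [i₁, j₁] and s₁' = [i₁', j₁'] be proper segments with s₁ ▷ s₁', and let s₂ = [i₂, j₂] and s₂' = [i₂', j₂'] be segments. Then the following are equivalent: (i) (s₁, s₂) and (s₁', s₂') are ladders and (s₁, s₂) ▷₁ (s₁', s₂') (i.e. s₁ ▷ s₁', s₂ ▷ s₂', and s₁ ▷ s₂'); (ii) i₁' < i₂' < i₁, j₁' < j₂' < j₁, i₁ < i₂ ≤ j₂', and j₁ < j₂ ≤ h + i₂'. Moreover, if such a pair (s₂, s₂') exists, then i₁ − i₁' ≥ 2, j₁ − j₁' ≥ 2, and h ≥ 4; and if h = 4, then necessarily supp(s₁) = 2, s₁' = s₁*, s₂ = 1 + s₁, and s₂' = 1 + s₁'. -/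
namespace SnakePaper

/-!
A covering relation between pairs of half-integers makes both of them proper segments, so the
inequalities in (ii) already contain every segment and ladder condition in (i).

A `1`-covering pair closes up into the cycle `i₂' < i₁ < i₂ ≤ j₂' < j₁ < j₂ ≤ h + i₂'`. Each of its
four strict steps has size at least `1`, which forces `h ≥ 4`; when `h = 4` there is no slack, so
every step is exactly `1` and every weak inequality is an equality.
-/

section IntegralOrder

variable {a b c : ℚ}

theorem zlt.to_zle (h : zlt a b) : zle a b :=
  let ⟨n, hn, hab⟩ := h
  ⟨n, hn.le, hab⟩

theorem zle.trans (hab : zle a b) (hbc : zle b c) : zle a c := by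
  obtain ⟨m, hm, hm_eq⟩ := hab
  obtain ⟨n, hn, hn_eq⟩ := hbc
  exact ⟨m + n, by omega, by push_cast; linarith⟩

theorem zlt.trans_zle (hab : zlt a b) (hbc : zle b c) : zlt a c := by
  obtain ⟨m, hm, hm_eq⟩ := hab
  obtain ⟨n, hn, hn_eq⟩ := hbc
  exact ⟨m + n, by omega, by push_cast; linarith⟩

theorem zle.trans_zlt (hab : zle a b) (hbc : zlt b c) : zlt a c := by
  obtain ⟨m, hm, hm_eq⟩ := hab
  obtain ⟨n, hn, hn_eq⟩ := hbc
  exact ⟨m + n, by omega, by push_cast; linarith⟩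

theorem zlt.trans (hab : zlt a b) (hbc : zlt b c) : zlt a c :=
  hab.trans_zle hbc.to_zle

theorem zle.le (h : zle a b) : a ≤ b := by
  obtain ⟨n, hn, hab⟩ := h
  have hn' : (0 : ℚ) ≤ n := by exact_mod_cast hn
  linarith

theorem zlt.add_one_le (h : zlt a b) : a + 1 ≤ b := by
  obtain ⟨n, hn, hab⟩ := h
  have hn' : (1 : ℚ) ≤ n := by exact_mod_cast hn
  linarith

theorem zle.half_integer_iff (h : zle a b) :
    (∃ m : ℤ, 2 * a = m) ↔ ∃ m : ℤ, 2 * b = m := by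
  obtain ⟨n, -, hab⟩ := h
  constructor
  · rintro ⟨m, hm⟩
    exact ⟨m + 2 * n, by push_cast; linarith⟩
  · rintro ⟨m, hm⟩
    exact ⟨m - 2 * n, by push_cast; linarith⟩

end IntegralOrder

section Segments

variable {N : ℕ} {s t : ℚ × ℚ}

theorem IsProperSeg.isSeg (hs : IsProperSeg N s) : IsSeg N s :=
  let ⟨hm, n, hn, hpos, hlt⟩ := hs
  ⟨hm, n, hn, hpos.le, hlt.le⟩

theorem isProperSeg_of_zlt (hm : ∃ m : ℤ, 2 * s.1 = m) (hlt : zlt s.1 s.2)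
    (hlt_h : s.2 < (N : ℚ) + 1 + s.1) : IsProperSeg N s := by
  obtain ⟨n, hn, hs⟩ := hlt
  exact ⟨hm, n, hs, hn, by linarith⟩

theorem Covers.isProperSeg_left (h : Covers N s t) (hs : ∃ m : ℤ, 2 * s.1 = m) :
    IsProperSeg N s := by
  obtain ⟨hfst, hmid, hsnd, hle⟩ := h
  exact isProperSeg_of_zlt hs (hmid.trans_zlt hsnd) (by linarith [hfst.add_one_le, hle.le])

theorem Covers.isProperSeg_right (h : Covers N s t) (ht : ∃ m : ℤ, 2 * t.1 = m) :
    IsProperSeg N t := by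
  obtain ⟨hfst, hmid, hsnd, hle⟩ := h
  exact isProperSeg_of_zlt ht (hfst.trans_zle hmid) (by linarith [hsnd.add_one_le, hle.le])

end Segments

section Pairs

variable {N : ℕ} {s₁ s₁' s₂ s₂' : ℚ × ℚ}

theorem pair1Cover_iff (hs₁ : ∃ m : ℤ, 2 * s₁.1 = m) (hcov : Covers N s₁ s₁') :
    Pair1Cover N s₁ s₁' s₂ s₂' ↔
      zlt s₁'.1 s₂'.1 ∧ zlt s₂'.1 s₁.1 ∧ zlt s₁'.2 s₂'.2 ∧ zlt s₂'.2 s₁.2 ∧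
      zlt s₁.1 s₂.1 ∧ zle s₂.1 s₂'.2 ∧ zlt s₁.2 s₂.2 ∧ zle s₂.2 ((N : ℚ) + 1 + s₂'.1) := by
  constructor
  · rintro ⟨⟨-, -, hi, hj⟩, ⟨-, -, hi', hj'⟩, -, ⟨-, hmid, -, hle⟩, ⟨hi₂', -, hj₂', -⟩⟩
    exact ⟨hi', hi₂', hj', hj₂', hi, hmid, hj, hle⟩
  · rintro ⟨hi', hi₂', hj', hj₂', hi, hmid, hj, hle⟩
    have hcov₂ : Covers N s₂ s₂' := ⟨hi₂'.trans hi, hmid, hj₂'.trans hj, hle⟩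
    have hcov₁₂ : Covers N s₁ s₂' :=
      ⟨hi₂', hi.to_zle.trans hmid, hj₂', hj.to_zle.trans hle⟩
    have hseg₁ := hcov.isProperSeg_left hs₁
    have hseg₂ := hcov₂.isProperSeg_left (hi.to_zle.half_integer_iff.1 hs₁)
    have hseg₁' := hcov.isProperSeg_right (hcov.1.to_zle.half_integer_iff.2 hs₁)
    have hseg₂' := hcov₂.isProperSeg_right (hi₂'.to_zle.half_integer_iff.2 hs₁)
    exact ⟨⟨hseg₁.isSeg, hseg₂.isSeg, hi, hj⟩, ⟨hseg₁'.isSeg, hseg₂'.isSeg, hi', hj'⟩,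
      hcov, hcov₂, hcov₁₂⟩

theorem Pair1Cover.fst_add_one_le (h : Pair1Cover N s₁ s₁' s₂ s₂') :
    s₁'.1 + 1 ≤ s₂'.1 ∧ s₂'.1 + 1 ≤ s₁.1 ∧ s₁.1 + 1 ≤ s₂.1 := by
  obtain ⟨⟨-, -, hi, -⟩, ⟨-, -, hi', -⟩, -, -, ⟨hi₂', -⟩⟩ := h
  exact ⟨hi'.add_one_le, hi₂'.add_one_le, hi.add_one_le⟩

theorem Pair1Cover.snd_add_one_le (h : Pair1Cover N s₁ s₁' s₂ s₂') :
    s₁'.2 + 1 ≤ s₂'.2 ∧ s₂'.2 + 1 ≤ s₁.2 ∧ s₁.2 + 1 ≤ s₂.2 := by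
  obtain ⟨⟨-, -, -, hj⟩, ⟨-, -, -, hj'⟩, -, -, ⟨-, -, hj₂', -⟩⟩ := h
  exact ⟨hj'.add_one_le, hj₂'.add_one_le, hj.add_one_le⟩

theorem Pair1Cover.two_le_fst_sub (h : Pair1Cover N s₁ s₁' s₂ s₂') : 2 ≤ s₁.1 - s₁'.1 := by
  obtain ⟨hi', hi₂', -⟩ := h.fst_add_one_le
  linarith

theorem Pair1Cover.two_le_snd_sub (h : Pair1Cover N s₁ s₁' s₂ s₂') : 2 ≤ s₁.2 - s₁'.2 := by
  obtain ⟨hj', hj₂', -⟩ := h.snd_add_one_le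
  linarith

theorem Pair1Cover.three_le (h : Pair1Cover N s₁ s₁' s₂ s₂') : 3 ≤ N := by
  obtain ⟨-, hi₂', hi⟩ := h.fst_add_one_le
  obtain ⟨-, hj₂', hj⟩ := h.snd_add_one_le
  obtain ⟨-, -, -, ⟨-, hmid, -, hle⟩, -⟩ := h
  have hcycle : s₂'.1 + 4 ≤ (N : ℚ) + 1 + s₂'.1 := calc
    s₂'.1 + 4 ≤ s₂.1 + 2 := by linarith
    _ ≤ s₂'.2 + 2 := by linarith [hmid.le]
    _ ≤ s₂.2 := by linarith
    _ ≤ (N : ℚ) + 1 + s₂'.1 := hle.le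
  have hN : (3 : ℚ) ≤ N := by linarith
  exact_mod_cast hN

theorem Pair1Cover.coords_eq_of_three (h : Pair1Cover 3 s₁ s₁' s₂ s₂') :
    s₁ = (s₂'.1 + 1, s₂'.1 + 3) ∧ s₂ = (s₂'.1 + 2, s₂'.1 + 4) ∧ s₂'.2 = s₂'.1 + 2 := by
  obtain ⟨-, hi₂', hi⟩ := h.fst_add_one_le
  obtain ⟨-, hj₂', hj⟩ := h.snd_add_one_le
  obtain ⟨-, -, -, ⟨-, hmid, -, hle⟩, -⟩ := h
  have hmid_le : s₂.1 ≤ s₂'.2 := hmid.le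
  have hle_four : s₂.2 ≤ s₂'.1 + 4 := by
    have := hle.le
    push_cast at this
    linarith
  exact ⟨Prod.ext (by linarith) (by linarith), Prod.ext (by linarith) (by linarith),
    by linarith⟩

theorem Pair1Cover.covered_coords_eq_of_three (h : Pair1Cover 3 s₁ s₁' s₂ s₂') :
    s₁' = (s₂'.1 - 1, s₂'.1 + 1) := by
  obtain ⟨rfl, -, hs₂'⟩ := h.coords_eq_of_three
  obtain ⟨hi', -⟩ := h.fst_add_one_le
  obtain ⟨hj', -⟩ := h.snd_add_one_le
  obtain ⟨-, -, ⟨-, hmid, -, hle⟩, -⟩ := h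
  have hmid_le : s₂'.1 + 1 ≤ s₁'.2 := hmid.le
  have hle_four : s₂'.1 + 3 ≤ s₁'.1 + 4 := by
    have := hle.le
    push_cast at this
    linarith
  exact Prod.ext (by linarith) (by linarith)

theorem Pair1Cover.rigid_of_three (h : Pair1Cover 3 s₁ s₁' s₂ s₂') :
    supp s₁ = 2 ∧ s₁' = dual 3 s₁ ∧ s₂ = shift s₁ ∧ s₂' = shift s₁' := by
  obtain ⟨hs₁, hs₂, hs₂'⟩ := h.coords_eq_of_three
  rw [h.covered_coords_eq_of_three, hs₁, hs₂]
  refine ⟨?_, Prod.ext ?_ ?_, Prod.ext ?_ ?_, Prod.ext ?_ ?_⟩ <;>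
    simp only [supp, dual, shift] <;> push_cast <;> linarith

end Pairs

/-- Characterization of `1`-covering pairs of length-2 ladders extending
`s₁ ▷ s₁'`, together with the consequences `i₁ − i₁' ≥ 2`, `j₁ − j₁' ≥ 2`,
`h ≥ 4`, and the rigidity in the case `h = 4`. -/
theorem one_cover_characterization (N : ℕ) (hN : 1 ≤ N) (s₁ s₁' : ℚ × ℚ)
    (h₁ : IsProperSeg N s₁) (h₁' : IsProperSeg N s₁') (hcov : Covers N s₁ s₁') :
    (∀ s₂ s₂' : ℚ × ℚ,
      Pair1Cover N s₁ s₁' s₂ s₂' ↔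
        (zlt s₁'.1 s₂'.1 ∧ zlt s₂'.1 s₁.1 ∧ zlt s₁'.2 s₂'.2 ∧ zlt s₂'.2 s₁.2 ∧
         zlt s₁.1 s₂.1 ∧ zle s₂.1 s₂'.2 ∧ zlt s₁.2 s₂.2 ∧
         zle s₂.2 (((N : ℚ) + 1) + s₂'.1))) ∧
    ((∃ s₂ s₂' : ℚ × ℚ, Pair1Cover N s₁ s₁' s₂ s₂') →
      2 ≤ s₁.1 - s₁'.1 ∧ 2 ≤ s₁.2 - s₁'.2 ∧ 3 ≤ N) ∧
    (∀ s₂ s₂' : ℚ × ℚ, Pair1Cover N s₁ s₁' s₂ s₂' → N = 3 →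
      supp s₁ = 2 ∧ s₁' = dual N s₁ ∧ s₂ = shift s₁ ∧ s₂' = shift s₁') := by
  refine ⟨fun s₂ s₂' => pair1Cover_iff h₁.1 hcov, ?_, ?_⟩
  · rintro ⟨s₂, s₂', h⟩
    exact ⟨h.two_le_fst_sub, h.two_le_snd_sub, h.three_le⟩
  · rintro s₂ s₂' h rfl
    exact h.rigid_of_three

end SnakePaper
end
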